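/- Let X be a finite nonempty set, T : X × X → ℝ a row-stochastic matrix (T_{xy} ≥ 0 and Σ_y T_{xy} = 1 for all x), r : X → ℝ a strictly positive probability distribution with Σ_x r_x·T_{xy} = r_y for all y, and (ϑ̂_{xy})_{x,y∈X} a family of d×d complex density matrices. Then the following are equivalent: (1) there exists α > 0 such that for all x, y ∈ X the matrix T_{xy}·ϑ̂_{xy} − α·r_y·Σ_w T_{xw}·ϑ̂_{xw} is positive semidefinite; (2) T_{xy} > 0 for all x, y ∈ X, and for all x, y, z ∈ X the matrices ϑ̂_{xy} and ϑ̂_{xz} have the same range. -/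

import Mathlib

open Matrix
open scoped ComplexOrder

/-!
Write `A ≽ B` when `A - c • B` is positive semidefinite for some `c > 0`. For positive semidefinite
matrices this is the inclusion `range B ≤ range A`: if `A = P * Pᴴ`, `B = Q * Qᴴ` and
`range Q ≤ range P`, then `Q = P * D` and `D * Dᴴ` lies below a multiple of the identity; conversely
`A` is the sum of `A - c • B` and `c • B`, and the range of a sum of positive semidefinite matrices
is the sum of their ranges. Finitely many such relations hold with a common constant. Hence
`T x y • ϑ x y ≽ ∑ w, T x w • ϑ x w` for all `y` says that `T x y • ϑ x y` has the same range for
all `y`. As some entry of the row `T x` is positive and no `ϑ x w` vanishes, this common range is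
nonzero, so that every `T x y` is positive.
-/

section Range

variable {R m n k : Type*} [CommSemiring R] [Fintype n] [Fintype k]

theorem exists_eq_mul_of_range_mulVecLin_le {A : Matrix m n R} {B : Matrix m k R}
    (h : LinearMap.range B.mulVecLin ≤ LinearMap.range A.mulVecLin) :
    ∃ D : Matrix n k R, B = A * D := by
  classical
  have hcol (j : k) : ∃ v, A *ᵥ v = B.col j := h ⟨Pi.single j 1, by simp⟩
  choose v hv using hcol
  exact ⟨of fun i j => v j i, ext fun i j => (congrFun (hv j) i).symm⟩

theorem range_mulVecLin_mul_le (A : Matrix m n R) (B : Matrix n k R) :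
    LinearMap.range (A * B).mulVecLin ≤ LinearMap.range A.mulVecLin := by
  rw [mulVecLin_mul]
  exact LinearMap.range_comp_le_range _ _

theorem range_mulVecLin_eq_bot_iff {A : Matrix m n R} :
    LinearMap.range A.mulVecLin = ⊥ ↔ A = 0 := by
  rw [LinearMap.range_eq_bot, LinearMap.ext_iff, ext_iff_mulVec]
  simp only [mulVecLin_apply, LinearMap.zero_apply, zero_mulVec]

theorem range_mulVecLin_fromCols (A : Matrix m n R) (B : Matrix m k R) :
    LinearMap.range (fromCols A B).mulVecLin =
      LinearMap.range A.mulVecLin ⊔ LinearMap.range B.mulVecLin := by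
  have hcol : (fromCols A B).col = Sum.elim A.col B.col := by
    ext (_ | _) _ <;> rfl
  rw [range_mulVecLin, range_mulVecLin, range_mulVecLin, hcol, Set.Sum.elim_range,
    Submodule.span_union]

end Range

theorem range_mulVecLin_mul_conjTranspose_self {R m n : Type*} [Field R] [PartialOrder R]
    [StarRing R] [StarOrderedRing R] [Fintype m] [Fintype n] (A : Matrix m n R) :
    LinearMap.range (A * Aᴴ).mulVecLin = LinearMap.range A.mulVecLin :=
  Submodule.eq_of_le_of_finrank_eq (range_mulVecLin_mul_le A Aᴴ) (rank_self_mul_conjTranspose A)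

section RCLike

variable {𝕜 ι m n : Type*} [RCLike 𝕜]

theorem posSemidef_sub_smul_of_le {A B : Matrix n n 𝕜} (hB : B.PosSemidef) {c c' : ℝ}
    (h : (A - c • B).PosSemidef) (hc : c' ≤ c) : (A - c' • B).PosSemidef := by
  have hsum : A - c' • B = (A - c • B) + (c - c') • B := by module
  rw [hsum]
  exact h.add (hB.smul (sub_nonneg.2 hc))

open scoped MatrixOrder in
theorem exists_pos_posSemidef_smul_one_sub [Finite n] [DecidableEq n] {M : Matrix n n 𝕜}
    (hM : M.IsHermitian) : ∃ b : ℝ, 0 < b ∧ (b • (1 : Matrix n n 𝕜) - M).PosSemidef := by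
  have := Fintype.ofFinite n
  obtain ⟨b, hb⟩ := (Set.finite_range hM.eigenvalues).bddAbove
  refine ⟨max b 1, by positivity, ?_⟩
  rw [← Algebra.algebraMap_eq_smul_one, ← le_iff]
  refine le_algebraMap_of_spectrum_le (fun t ht => ?_) hM
  rw [hM.spectrum_real_eq_range_eigenvalues] at ht
  exact (hb ht).trans (le_max_left b 1)

variable [Fintype n]

theorem range_mulVecLin_real_smul (A : Matrix m n 𝕜) {c : ℝ} (hc : c ≠ 0) :
    LinearMap.range (c • A).mulVecLin = LinearMap.range A.mulVecLin := by
  have hsmul : (c • A).mulVecLin = (c : 𝕜) • A.mulVecLin := by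
    ext v i
    simp [RCLike.real_smul_eq_coe_mul]
  rw [hsmul, LinearMap.range_smul _ _ (RCLike.ofReal_ne_zero.2 hc)]

open scoped MatrixOrder in
theorem exists_eq_mul_conjTranspose_self_of_posSemidef {A : Matrix n n 𝕜} (hA : A.PosSemidef) :
    ∃ P : Matrix n n 𝕜, A = P * Pᴴ := by
  classical
  exact CStarAlgebra.nonneg_iff_eq_mul_star_self.1 hA.nonneg

theorem range_mulVecLin_add_of_posSemidef {A B : Matrix n n 𝕜} (hA : A.PosSemidef)
    (hB : B.PosSemidef) :
    LinearMap.range (A + B).mulVecLin =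
      LinearMap.range A.mulVecLin ⊔ LinearMap.range B.mulVecLin := by
  obtain ⟨P, rfl⟩ := exists_eq_mul_conjTranspose_self_of_posSemidef hA
  obtain ⟨Q, rfl⟩ := exists_eq_mul_conjTranspose_self_of_posSemidef hB
  rw [← fromCols_mul_fromRows, ← conjTranspose_fromCols_eq_fromRows_conjTranspose]
  simp only [range_mulVecLin_mul_conjTranspose_self, range_mulVecLin_fromCols]

theorem range_mulVecLin_sum_of_posSemidef (s : Finset ι) {A : ι → Matrix n n 𝕜}
    (hA : ∀ i ∈ s, (A i).PosSemidef) :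
    LinearMap.range (∑ i ∈ s, A i).mulVecLin = ⨆ i ∈ s, LinearMap.range (A i).mulVecLin := by
  classical
  induction s using Finset.induction_on with
  | empty => simp [mulVecLin_zero]
  | insert i s hi ih =>
    rw [Finset.forall_mem_insert] at hA
    rw [Finset.sum_insert hi, Finset.iSup_insert,
      range_mulVecLin_add_of_posSemidef hA.1 (posSemidef_sum s hA.2), ih hA.2]

theorem exists_pos_posSemidef_sub_smul_of_range_le {A B : Matrix n n 𝕜} (hA : A.PosSemidef)
    (hB : B.PosSemidef) (h : LinearMap.range B.mulVecLin ≤ LinearMap.range A.mulVecLin) :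
    ∃ c : ℝ, 0 < c ∧ (A - c • B).PosSemidef := by
  classical
  obtain ⟨P, rfl⟩ := exists_eq_mul_conjTranspose_self_of_posSemidef hA
  obtain ⟨Q, rfl⟩ := exists_eq_mul_conjTranspose_self_of_posSemidef hB
  simp only [range_mulVecLin_mul_conjTranspose_self] at h
  obtain ⟨D, rfl⟩ := exists_eq_mul_of_range_mulVecLin_le h
  obtain ⟨b, hb, hbD⟩ := exists_pos_posSemidef_smul_one_sub (isHermitian_mul_conjTranspose_self D)
  have hfactor : P * Pᴴ - b⁻¹ • (P * D * (P * D)ᴴ) =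
      b⁻¹ • (P * (b • (1 : Matrix n n 𝕜) - D * Dᴴ) * Pᴴ) := by
    simp [mul_sub, sub_mul, smul_sub, hb.ne', Matrix.mul_assoc]
  refine ⟨b⁻¹, inv_pos.2 hb, ?_⟩
  rw [hfactor]
  exact (hbD.mul_mul_conjTranspose_same P).smul (inv_pos.2 hb).le

theorem range_le_of_posSemidef_sub_smul {A B : Matrix n n 𝕜} (hB : B.PosSemidef) {c : ℝ}
    (hc : 0 < c) (h : (A - c • B).PosSemidef) :
    LinearMap.range B.mulVecLin ≤ LinearMap.range A.mulVecLin := by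
  rw [← sub_add_cancel A (c • B), range_mulVecLin_add_of_posSemidef h (hB.smul hc.le),
    range_mulVecLin_real_smul B hc.ne']
  exact le_sup_right

open Filter Topology in
theorem exists_pos_forall_posSemidef_sub_smul_iff [Finite ι] {A B : ι → Matrix n n 𝕜}
    (hA : ∀ i, (A i).PosSemidef) (hB : ∀ i, (B i).PosSemidef) :
    (∃ α : ℝ, 0 < α ∧ ∀ i, (A i - α • B i).PosSemidef) ↔
      ∀ i, LinearMap.range (B i).mulVecLin ≤ LinearMap.range (A i).mulVecLin := by
  refine ⟨fun ⟨α, hα, h⟩ i => range_le_of_posSemidef_sub_smul (hB i) hα (h i), fun h => ?_⟩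
  have hsmall (i : ι) : ∀ᶠ α in 𝓝[>] (0 : ℝ), (A i - α • B i).PosSemidef := by
    obtain ⟨c, hc, hdom⟩ := exists_pos_posSemidef_sub_smul_of_range_le (hA i) (hB i) (h i)
    filter_upwards [Ioc_mem_nhdsGT hc] with α hα
    exact posSemidef_sub_smul_of_le (hB i) hdom hα.2
  exact (eventually_mem_nhdsWithin.and (eventually_all.2 hsmall)).exists

theorem forall_range_real_smul_le_iff {t : ι → ℝ} (ht : ∀ i, 0 ≤ t i) (ht' : ∃ i, t i ≠ 0)
    {A : ι → Matrix m n 𝕜} (hA : ∀ i, A i ≠ 0) :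
    (∀ i j, LinearMap.range (t j • A j).mulVecLin ≤ LinearMap.range (t i • A i).mulVecLin) ↔
      (∀ i, 0 < t i) ∧
        ∀ i j, LinearMap.range (A i).mulVecLin = LinearMap.range (A j).mulVecLin := by
  constructor
  · intro h
    obtain ⟨k, hk⟩ := ht'
    have hpos (i : ι) : 0 < t i := by
      refine (ht i).lt_of_ne' fun hi => smul_ne_zero hk (hA k) ?_
      have hbot : LinearMap.range (t k • A k).mulVecLin ≤ ⊥ := by
        simpa only [hi, zero_smul, mulVecLin_zero, LinearMap.range_zero] using h i k
      exact range_mulVecLin_eq_bot_iff.1 (le_bot_iff.1 hbot)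
    simp only [range_mulVecLin_real_smul _ (hpos _).ne'] at h
    exact ⟨hpos, fun i j => (h j i).antisymm (h i j)⟩
  · rintro ⟨hpos, h⟩ i j
    rw [range_mulVecLin_real_smul _ (hpos j).ne', range_mulVecLin_real_smul _ (hpos i).ne', h]

end RCLike

theorem lowerFact_condition_iff_right_general {𝕜 X Y n : Type*} [RCLike 𝕜] [Finite X] [Fintype Y]
    [Fintype n] {T : X → Y → ℝ} (hT : ∀ x y, 0 ≤ T x y) (hT' : ∀ x, ∃ y, T x y ≠ 0)
    {r : Y → ℝ} (hr : ∀ y, 0 < r y) {ϑ : X → Y → Matrix n n 𝕜}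
    (hϑ : ∀ x y, (ϑ x y).PosSemidef) (hϑ' : ∀ x y, ϑ x y ≠ 0) :
    (∃ α : ℝ, 0 < α ∧ ∀ x y,
        (T x y • ϑ x y - α • r y • ∑ w, T x w • ϑ x w).PosSemidef) ↔
      ((∀ x y, 0 < T x y) ∧
        ∀ x y z, LinearMap.range (ϑ x y).mulVecLin = LinearMap.range (ϑ x z).mulVecLin) := by
  have hTϑ (x : X) (y : Y) : (T x y • ϑ x y).PosSemidef := (hϑ x y).smul (hT x y)
  have hsum (x : X) (y : Y) : (r y • ∑ w, T x w • ϑ x w).PosSemidef :=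
    (posSemidef_sum _ fun w _ => hTϑ x w).smul (hr y).le
  have huniform := exists_pos_forall_posSemidef_sub_smul_iff (ι := X × Y)
    (fun p => hTϑ p.1 p.2) (fun p => hsum p.1 p.2)
  simp only [Prod.forall] at huniform
  rw [huniform, ← forall_and]
  refine forall_congr' fun x => ?_
  rw [← forall_range_real_smul_le_iff (hT x) (hT' x) (hϑ' x)]
  simp only [range_mulVecLin_real_smul _ (hr _).ne',
    range_mulVecLin_sum_of_posSemidef _ fun w _ => hTϑ x w, Finset.mem_univ, iSup_pos, iSup_le_iff]

/-- For a stationary Markov chain with transition matrix `T`, invariant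
distribution `r` and emission states `ϑ_{xy}`, the domination condition
`E* ≥ α·((id ⊗ T*) ∘ E*)` (expressed entrywise on minimal projections) holds for some
`α > 0` iff `T > 0` and `range ϑ_{xy} = range ϑ_{xz}` for all `x, y, z`. -/
theorem lowerFact_condition_iff_right
    (X : Type*) [Fintype X] [Nonempty X] (d : ℕ)
    (T : X → X → ℝ) (hT0 : ∀ x y, 0 ≤ T x y) (hT1 : ∀ x, ∑ y, T x y = 1)
    (r : X → ℝ) (hr : ∀ x, 0 < r x) (hrsum : ∑ x, r x = 1)
    (hstat : ∀ y, ∑ x, r x * T x y = r y)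
    (ϑ : X → X → Matrix (Fin d) (Fin d) ℂ)
    (hϑ : ∀ x y, (ϑ x y).PosSemidef ∧ (ϑ x y).trace = 1) :
    (∃ α : ℝ, 0 < α ∧ ∀ x y,
        (T x y • ϑ x y - α • r y • ∑ w, T x w • ϑ x w).PosSemidef) ↔
      ((∀ x y, 0 < T x y) ∧
        ∀ x y z, LinearMap.range (ϑ x y).mulVecLin = LinearMap.range (ϑ x z).mulVecLin) :=
  lowerFact_condition_iff_right_general hT0
    (fun x => by simpa using Finset.exists_ne_zero_of_sum_ne_zero ((hT1 x).trans_ne one_ne_zero)) hr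
    (fun x y => (hϑ x y).1) fun x y h => by simpa [h] using (hϑ x y).2
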